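/- For all complex quaternions A and B, the 8×8 real matrices Γ(A) and P·Θ(B)·P commute, where P is the 8×8 block-diagonal matrix diag(I₄, α) with α = diag(1, 1, −1, −1): Γ(A)·P·Θ(B)·P = P·Θ(B)·P·Γ(A). -/

import Mathlib

open Quaternion Matrix

noncomputable def lm (a : ℍ[ℝ]) : Matrix (Fin 4) (Fin 4) ℝ :=
  !![a.re, -a.imI, -a.imJ, -a.imK;
     a.imI, a.re, -a.imK, a.imJ;
     a.imJ, a.imK, a.re, -a.imI;
     a.imK, -a.imJ, a.imI, a.re]

noncomputable def rm (a : ℍ[ℝ]) : Matrix (Fin 4) (Fin 4) ℝ :=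
  !![a.re, -a.imI, -a.imJ, -a.imK;
     a.imI, a.re, a.imK, -a.imJ;
     a.imJ, -a.imK, a.re, a.imI;
     a.imK, a.imJ, -a.imI, a.re]

/-- The star operation a* = a₀ + a₁e₁ − a₂e₂ − a₃e₃. -/
noncomputable def st (a : ℍ[ℝ]) : ℍ[ℝ] := ⟨a.re, a.imI, -a.imJ, -a.imK⟩

/-- The left real matrix representation of the complex quaternion X = x + iy. -/
noncomputable def Gamma (x y : ℍ[ℝ]) : Matrix (Fin 4 ⊕ Fin 4) (Fin 4 ⊕ Fin 4) ℝ :=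
  Matrix.fromBlocks (lm x) (-(lm (st y))) (lm y) (lm (st x))

/-- The right real matrix representation of the complex quaternion X = x + iy. -/
noncomputable def Theta (x y : ℍ[ℝ]) : Matrix (Fin 4 ⊕ Fin 4) (Fin 4 ⊕ Fin 4) ℝ :=
  Matrix.fromBlocks (rm x) (-(rm y)) (rm (st y)) (rm (st x))

/-- The 4×4 diagonal matrix α = diag(1, 1, −1, −1). -/
noncomputable def α : Matrix (Fin 4) (Fin 4) ℝ :=
  !![1, 0, 0, 0;
     0, 1, 0, 0;
     0, 0, -1, 0;
     0, 0, 0, -1]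

/-- The 8×8 block-diagonal matrix P = diag(I₄, α). -/
noncomputable def P : Matrix (Fin 4 ⊕ Fin 4) (Fin 4 ⊕ Fin 4) ℝ :=
  Matrix.fromBlocks 1 0 0 α

/-!
In the basis `1, e₁, e₂, e₃`, the matrices `lm a`, `rm a` and `α` represent left multiplication
by `a`, right multiplication by `a`, and the algebra involution `st` of `ℍ[ℝ]`. Associativity makes
`lm a` and `rm c` commute, and multiplicativity of `st` makes `α` intertwine `lm a` with
`lm (st a)` and `rm c` with `rm (st c)`. Hence conjugation by `P` brings `Theta c d` to the form
`fromBlocks C (-S) S C`, where `C = rm c` commutes with every `lm x` and `S = rm d * α` intertwines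
`lm x` with `lm (st x)`; these relations say block by block that it commutes with `Gamma a b`.
-/

section AlgHom

variable {R A : Type*} [CommSemiring R] [Semiring A] [Algebra R A]

theorem semiconjBy_toLinearMap_mulLeft (f : A →ₐ[R] A) (a : A) :
    SemiconjBy (f.toLinearMap : Module.End R A) (LinearMap.mulLeft R a)
      (LinearMap.mulLeft R (f a)) :=
  LinearMap.ext fun x => map_mul f a x

theorem semiconjBy_toLinearMap_mulRight (f : A →ₐ[R] A) (a : A) :
    SemiconjBy (f.toLinearMap : Module.End R A) (LinearMap.mulRight R a)
      (LinearMap.mulRight R (f a)) :=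
  LinearMap.ext fun x => map_mul f x a

end AlgHom

theorem toMatrixAlgEquiv_eq_of_mulVec_repr {n R V : Type*} [Fintype n] [DecidableEq n]
    [CommSemiring R] [AddCommMonoid V] [Module R V] {v : Module.Basis n R V}
    {f : Module.End R V} {M : Matrix n n R} (h : ∀ x, M *ᵥ v.repr x = v.repr (f x)) :
    LinearMap.toMatrixAlgEquiv v f = M := by
  ext i j
  calc LinearMap.toMatrixAlgEquiv v f i j
      = v.repr (f (v j)) i := LinearMap.toMatrixAlgEquiv_apply v f i j
    _ = (M *ᵥ v.repr (v j)) i := (congrFun (h (v j)) i).symm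
    _ = M i j := by simp [Finsupp.single_eq_pi_single]

theorem commute_fromBlocks_of_semiconjBy {n R : Type*} [Fintype n] [NonUnitalNonAssocRing R]
    {A A' B B' C S : Matrix n n R}
    (hA : Commute A C) (hA' : Commute A' C) (hB : Commute B C) (hB' : Commute B' C)
    (hSA : SemiconjBy S A A') (hSA' : SemiconjBy S A' A)
    (hSB : SemiconjBy S B B') (hSB' : SemiconjBy S B' B) :
    Commute (fromBlocks A (-B') B A') (fromBlocks C (-S) S C) := by
  rw [commute_iff_eq, fromBlocks_multiply, fromBlocks_multiply]
  simp only [Matrix.neg_mul, Matrix.mul_neg, hA.eq, hA'.eq, hB.eq, hB'.eq,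
    hSA.eq, hSA'.eq, hSB.eq, hSB'.eq]
  congr 1 <;> abel

@[simp] theorem re_st (a : ℍ[ℝ]) : (st a).re = a.re := rfl
@[simp] theorem imI_st (a : ℍ[ℝ]) : (st a).imI = a.imI := rfl
@[simp] theorem imJ_st (a : ℍ[ℝ]) : (st a).imJ = -a.imJ := rfl
@[simp] theorem imK_st (a : ℍ[ℝ]) : (st a).imK = -a.imK := rfl

theorem st_st (a : ℍ[ℝ]) : st (st a) = a := by
  ext <;> simp

theorem st_mul (a b : ℍ[ℝ]) : st (a * b) = st a * st b := by
  ext <;> simp <;> ring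

/-- The operation `a ↦ a*` as an algebra endomorphism of the quaternions; it is the inner
automorphism `a ↦ e₁ a e₁⁻¹`. -/
noncomputable def stAlgHom : ℍ[ℝ] →ₐ[ℝ] ℍ[ℝ] where
  toFun := st
  map_one' := by ext <;> simp
  map_mul' := st_mul
  map_zero' := by ext <;> simp
  map_add' a b := by ext <;> simp <;> ring
  commutes' r := by ext <;> simp

/-- The basis `1, e₁, e₂, e₃` of the real quaternions: Mathlib's basis of a general quaternion
algebra, restated for the type `ℍ[ℝ]`. -/
noncomputable def quaternionBasis : Module.Basis (Fin 4) ℝ ℍ[ℝ] :=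
  QuaternionAlgebra.basisOneIJK (-1) 0 (-1)

theorem quaternionBasis_repr (a : ℍ[ℝ]) :
    ⇑(quaternionBasis.repr a) = ![a.re, a.imI, a.imJ, a.imK] :=
  rfl

/-- The matrix, acting on coordinate columns, of a real-linear endomorphism of the quaternions in
the basis `1, e₁, e₂, e₃`. It turns identities between operators into identities between `lm`,
`rm` and `α`. -/
noncomputable def quaternionMatrix : Module.End ℝ ℍ[ℝ] ≃ₐ[ℝ] Matrix (Fin 4) (Fin 4) ℝ :=
  LinearMap.toMatrixAlgEquiv quaternionBasis

theorem quaternionMatrix_mulLeft (a : ℍ[ℝ]) :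
    quaternionMatrix (LinearMap.mulLeft ℝ a) = lm a := by
  refine toMatrixAlgEquiv_eq_of_mulVec_repr fun x => ?_
  ext i
  fin_cases i <;>
    simp [quaternionBasis_repr, lm, mulVec, dotProduct, Fin.sum_univ_four] <;> ring

theorem quaternionMatrix_mulRight (a : ℍ[ℝ]) :
    quaternionMatrix (LinearMap.mulRight ℝ a) = rm a := by
  refine toMatrixAlgEquiv_eq_of_mulVec_repr fun x => ?_
  ext i
  fin_cases i <;>
    simp [quaternionBasis_repr, rm, mulVec, dotProduct, Fin.sum_univ_four] <;> ring

theorem quaternionMatrix_stAlgHom : quaternionMatrix stAlgHom.toLinearMap = α := by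
  refine toMatrixAlgEquiv_eq_of_mulVec_repr fun x => ?_
  ext i
  fin_cases i <;>
    simp [quaternionBasis_repr, α, mulVec, dotProduct, Fin.sum_univ_four, stAlgHom]

theorem commute_lm_rm (a b : ℍ[ℝ]) : Commute (lm a) (rm b) := by
  rw [← quaternionMatrix_mulLeft, ← quaternionMatrix_mulRight]
  exact (LinearMap.commute_mulLeft_right a b).map quaternionMatrix

theorem semiconjBy_α_lm (a : ℍ[ℝ]) : SemiconjBy α (lm a) (lm (st a)) := by
  rw [← quaternionMatrix_stAlgHom, ← quaternionMatrix_mulLeft, ← quaternionMatrix_mulLeft]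
  exact (semiconjBy_toLinearMap_mulLeft stAlgHom a).map quaternionMatrix

theorem semiconjBy_α_rm (a : ℍ[ℝ]) : SemiconjBy α (rm a) (rm (st a)) := by
  rw [← quaternionMatrix_stAlgHom, ← quaternionMatrix_mulRight, ← quaternionMatrix_mulRight]
  exact (semiconjBy_toLinearMap_mulRight stAlgHom a).map quaternionMatrix

theorem α_mul_α : α * α = 1 := by
  rw [← quaternionMatrix_stAlgHom, ← map_mul, ← map_one quaternionMatrix]
  exact congrArg quaternionMatrix (LinearMap.ext st_st)

theorem P_mul_Theta_mul_P (c d : ℍ[ℝ]) :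
    P * Theta c d * P = fromBlocks (rm c) (-(rm d * α)) (rm d * α) (rm c) := by
  have α_mul_rm_st (x : ℍ[ℝ]) : α * rm (st x) = rm x * α := by
    simpa only [st_st] using (semiconjBy_α_rm (st x)).eq
  simp [P, Theta, fromBlocks_multiply, α_mul_rm_st, Matrix.mul_assoc, α_mul_α]

theorem semiconjBy_rm_mul_α_lm (d x : ℍ[ℝ]) : SemiconjBy (rm d * α) (lm x) (lm (st x)) :=
  (commute_lm_rm (st x) d).symm.semiconjBy.mul_left (semiconjBy_α_lm x)

theorem semiconjBy_rm_mul_α_lm_st (d x : ℍ[ℝ]) : SemiconjBy (rm d * α) (lm (st x)) (lm x) := by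
  simpa only [st_st] using semiconjBy_rm_mul_α_lm d (st x)

theorem Gamma_commutes_PThetaP (a b c d : ℍ[ℝ]) :
    Gamma a b * (P * Theta c d * P) = (P * Theta c d * P) * Gamma a b := by
  rw [P_mul_Theta_mul_P, Gamma]
  exact commute_fromBlocks_of_semiconjBy
    (commute_lm_rm a c) (commute_lm_rm (st a) c) (commute_lm_rm b c) (commute_lm_rm (st b) c)
    (semiconjBy_rm_mul_α_lm d a) (semiconjBy_rm_mul_α_lm_st d a)
    (semiconjBy_rm_mul_α_lm d b) (semiconjBy_rm_mul_α_lm_st d b)
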